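/- Let S be a discrete p-toral group, and define Z̃ₙ(S) inductively by Z̃₀(S) = 1 and Z̃ₙ(S)/Z̃ₙ₋₁(S) = Ω₁(Z(S/Z̃ₙ₋₁(S))). If α is an automorphism of S of finite order prime to p such that [α, Z̃ₙ(S)] ≤ Z̃ₙ₋₁(S) for each n ≥ 1, then α is the identity. -/

import Mathlib

/-- ℚ/ℤ as an additive group. -/
abbrev QmodZ : Type := ℚ ⧸ AddSubgroup.zmultiples (1 : ℚ)

/-- The Prüfer p-group ℤ/p^∞, realized as the p-primary component of ℚ/ℤ,
written multiplicatively. -/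
def Prufer (p : ℕ) [Fact p.Prime] : Type :=
  Multiplicative (AddCommGroup.primaryComponent QmodZ p)

instance (p : ℕ) [Fact p.Prime] : CommGroup (Prufer p) :=
  Multiplicative.commGroup

/-- A group `S` is *discrete p-toral* if it has a normal subgroup `S₀` isomorphic to a
finite direct product of copies of `ℤ/p^∞` such that `S/S₀` is a finite `p`-group. -/
def IsDiscretePToral (p : ℕ) [Fact p.Prime] (S : Type*) [Group S] : Prop :=
  ∃ S₀ : Subgroup S, ∃ _ : S₀.Normal,
    (∃ r : ℕ, Nonempty (S₀ ≃* (Fin r → Prufer p))) ∧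
    Finite (S ⧸ S₀) ∧ IsPGroup p (S ⧸ S₀)

/-- `Ω₁(Z(G))`: the subgroup of the center of `G` generated by the elements `x`
with `x ^ p = 1`. -/
def omegaOneCenter (p : ℕ) (G : Type*) [Group G] : Subgroup G :=
  Subgroup.closure {x : G | x ∈ Subgroup.center G ∧ x ^ p = 1}

theorem omegaOneCenter_le_center (p : ℕ) (G : Type*) [Group G] :
    omegaOneCenter p G ≤ Subgroup.center G :=
  (Subgroup.closure_le _).2 fun _ hx => hx.1

instance omegaOneCenter_normal (p : ℕ) (G : Type*) [Group G] :
    (omegaOneCenter p G).Normal := by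
  constructor
  intro n hn g
  have hc := Subgroup.mem_center_iff.mp (omegaOneCenter_le_center p G hn) g
  rw [hc, mul_inv_cancel_right]
  exact hn

/-- The ascending chain `Z̃ₙ(S)`: `Z̃₀(S) = 1` and
`Z̃ₙ(S)/Z̃ₙ₋₁(S) = Ω₁(Z(S/Z̃ₙ₋₁(S)))`, packaged with a proof of normality. -/
def ZtilAux (p : ℕ) (S : Type*) [Group S] : ℕ → {H : Subgroup S // H.Normal}
  | 0 => ⟨⊥, inferInstance⟩
  | n + 1 =>
    let Z := ZtilAux p S n
    haveI := Z.2
    ⟨(omegaOneCenter p (S ⧸ Z.1)).comap (QuotientGroup.mk' Z.1),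
      Subgroup.Normal.comap (omegaOneCenter_normal p _) _⟩

/-- `Z̃ₙ(S)`, as a subgroup of `S`. -/
def Ztil (p : ℕ) (S : Type*) [Group S] (n : ℕ) : Subgroup S := (ZtilAux p S n).1

open scoped commutatorElement

namespace IsPGroup

/-- A nontrivial finite normal subgroup of a (possibly infinite) `p`-group contains a central
element of order `p`. -/
theorem exists_mem_center_pow_eq_one {p : ℕ} [Fact p.Prime] {G : Type*} [Group G]
    (hG : IsPGroup p G) (N : Subgroup G) [N.Normal] [Finite N] (hN : N ≠ ⊥) :
    ∃ x ∈ N, x ≠ 1 ∧ x ∈ Subgroup.center G ∧ x ^ p = 1 := by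
  have hdvd : p ∣ Nat.card N :=
    (hG.to_subgroup N).card_eq_or_dvd.resolve_left fun h => hN (Subgroup.card_eq_one.1 h)
  obtain ⟨b, hb, hb1⟩ := (hG.of_equiv ConjAct.toConjAct)
    |>.exists_fixed_point_of_prime_dvd_card_of_fixed_point N hdvd (a := 1)
      fun g => smul_one g
  have hbc : (b : G) ∈ Subgroup.center G := by
    rw [Subgroup.mem_center_iff]
    intro g
    have h := congrArg Subtype.val (hb (ConjAct.toConjAct g))
    rw [ConjAct.Subgroup.val_conj_smul, ConjAct.toConjAct_smul] at h
    exact mul_inv_eq_iff_eq_mul.1 h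
  have hb1' : (b : G) ≠ 1 := fun h => hb1 (Subtype.ext h.symm)
  have hd := hG.dvd_orderOf hb1'
  have hpos : orderOf (b : G) ≠ 0 :=
    (hG.isOfFinOrder (Fact.out : p.Prime).ne_zero _).orderOf_pos.ne'
  have hord : orderOf ((b : G) ^ (orderOf (b : G) / p)) = p := orderOf_pow_orderOf_div hpos hd
  refine ⟨(b : G) ^ (orderOf (b : G) / p), pow_mem b.2 _, fun h => ?_, pow_mem hbc _, ?_⟩
  · rw [h, orderOf_one] at hord
    exact (Fact.out : p.Prime).one_lt.ne hord
  · exact orderOf_dvd_iff_pow_eq_one.1 hord.dvd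

/-- An extension of a `p`-group by a `p`-group is a `p`-group. -/
theorem of_normal_of_quotient {p : ℕ} {G : Type*} [Group G] (N : Subgroup G) [N.Normal]
    (hN : IsPGroup p N) (hQ : IsPGroup p (G ⧸ N)) : IsPGroup p G := by
  rw [isPGroup_iff_pow_pow_eq_one] at *
  intro g
  obtain ⟨k, hk⟩ := hQ g
  rw [← QuotientGroup.mk_pow, QuotientGroup.eq_one_iff] at hk
  obtain ⟨l, hl⟩ := hN ⟨_, hk⟩
  refine ⟨k + l, ?_⟩
  rw [pow_add, pow_mul]
  exact congrArg Subtype.val hl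

/-- An automorphism of order prime to `p` of a `p`-group fixes every `x` for which
`α x * x⁻¹` is fixed. -/
theorem mulAut_apply_eq_self {p : ℕ} {G : Type*} [Group G] (hG : IsPGroup p G)
    {α : MulAut G} (hα : (orderOf α).Coprime p) {x : G}
    (hx : α (α x * x⁻¹) = α x * x⁻¹) : α x = x := by
  have hpow : ∀ k : ℕ, (α ^ k) x = (α x * x⁻¹) ^ k * x := by
    intro k
    induction k with
    | zero => simp
    | succ k ih =>
      rw [pow_succ', MulAut.mul_apply, ih, map_mul, map_pow, hx, pow_succ, mul_assoc _ _ x,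
        inv_mul_cancel_right]
  have h1 : (α x * x⁻¹) ^ orderOf α = 1 := by
    have h := hpow (orderOf α)
    rw [pow_orderOf_eq_one, MulAut.one_apply] at h
    exact right_eq_mul.1 h
  have h2 : orderOf (α x * x⁻¹) = 1 :=
    (hG.orderOf_coprime hα.symm _).eq_one_of_dvd (orderOf_dvd_of_pow_eq_one h1)
  exact mul_inv_eq_one.1 (orderOf_eq_one_iff.1 h2)

end IsPGroup

namespace Prufer

theorem isPGroup (p : ℕ) [Fact p.Prime] : IsPGroup p (Prufer p) := by
  rw [isPGroup_iff_pow_pow_eq_one]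
  rintro ⟨x, k, hk⟩
  exact ⟨k, congrArg Multiplicative.ofAdd (Subtype.ext hk)⟩

theorem finite_torsion (p : ℕ) [Fact p.Prime] {n : ℕ} (hn : 0 < n) :
    {x : Prufer p | x ^ n = 1}.Finite := by
  have hinj : Function.Injective
      fun x : Prufer p => ((Multiplicative.toAdd x).1 : AddCircle (1 : ℚ)) :=
    fun x y h => Multiplicative.toAdd.injective (Subtype.ext h)
  refine ((AddCircle.finite_torsion (1 : ℚ) hn).preimage hinj.injOn).subset fun x hx => ?_
  exact congrArg (fun y : Prufer p => (Multiplicative.toAdd y).1) hx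

theorem isPGroup_pi (p : ℕ) [Fact p.Prime] (r : ℕ) : IsPGroup p (Fin r → Prufer p) := by
  rw [isPGroup_iff_pow_pow_eq_one]
  intro x
  choose k hk using fun i => isPGroup_iff_pow_pow_eq_one.1 (isPGroup p) (x i)
  obtain ⟨m, hm⟩ := Finite.exists_le k
  exact ⟨m, funext fun i =>
    orderOf_dvd_iff_pow_eq_one.1 ((orderOf_dvd_of_pow_eq_one (hk i)).trans (pow_dvd_pow p (hm i)))⟩

theorem finite_torsion_pi (p : ℕ) [Fact p.Prime] (r : ℕ) {n : ℕ} (hn : 0 < n) :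
    {x : Fin r → Prufer p | x ^ n = 1}.Finite :=
  (Set.Finite.pi' fun _ : Fin r => finite_torsion p hn).subset fun _ hx i => congrFun hx i

end Prufer

namespace Ztil

variable {p : ℕ} {S : Type*} [Group S]

instance normal (n : ℕ) : (Ztil p S n).Normal := (ZtilAux p S n).2

theorem mem_zero {x : S} : x ∈ Ztil p S 0 ↔ x = 1 := Subgroup.mem_bot

theorem mem_succ_of_mk {n : ℕ} {x : S}
    (hc : (x : S ⧸ Ztil p S n) ∈ Subgroup.center (S ⧸ Ztil p S n))
    (hp : (x : S ⧸ Ztil p S n) ^ p = 1) : x ∈ Ztil p S (n + 1) :=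
  show (x : S ⧸ Ztil p S n) ∈ omegaOneCenter p (S ⧸ Ztil p S n) from
    Subgroup.subset_closure ⟨hc, hp⟩

theorem mem_succ {n : ℕ} {x : S} (hc : ∀ s, ⁅x, s⁆ ∈ Ztil p S n)
    (hp : x ^ p ∈ Ztil p S n) : x ∈ Ztil p S (n + 1) := by
  refine mem_succ_of_mk (Subgroup.mem_center_iff.2 fun g => ?_)
    ((QuotientGroup.eq_one_iff (x ^ p)).2 hp)
  obtain ⟨s, rfl⟩ := QuotientGroup.mk_surjective g
  have h := (QuotientGroup.eq_one_iff (N := Ztil p S n) _).2 (hc s)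
  exact (commutatorElement_eq_one_iff_mul_comm.1 h).symm

theorem monotone : Monotone (Ztil p S) :=
  monotone_nat_of_le_succ fun n x hx =>
    mem_succ (fun s => by
      rw [commutatorElement_def, mul_assoc, mul_assoc, ← mul_assoc s]
      exact mul_mem hx ((normal n).conj_mem _ (inv_mem hx) s)) (pow_mem hx p)

theorem mem_iSup {x : S} : x ∈ ⨆ n, Ztil p S n ↔ ∃ n, x ∈ Ztil p S n :=
  Subgroup.mem_iSup_of_directed monotone.directed_le

/-- A finite family of elements of `⋃ Z̃ₙ` lies in a single `Z̃ₘ`. -/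
theorem exists_forall_mem {ι : Type*} [Finite ι] {f : ι → S}
    (hf : ∀ i, f i ∈ ⨆ n, Ztil p S n) : ∃ m, ∀ i, f i ∈ Ztil p S m := by
  choose k hk using fun i => mem_iSup.1 (hf i)
  obtain ⟨m, hm⟩ := Finite.exists_le k
  exact ⟨m, fun i => monotone (hm i) (hk i)⟩

theorem finite_normal_le_iSup [Fact p.Prime] (hS : IsPGroup p S) (N : Subgroup S) [N.Normal]
    [Finite N] : N ≤ ⨆ n, Ztil p S n := by
  obtain ⟨m, hm⟩ := exists_forall_mem
    (f := fun x : {x : N // (x : S) ∈ ⨆ n, Ztil p S n} => (x : S)) fun x => x.2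
  by_contra hN
  have hne : N.map (QuotientGroup.mk' (Ztil p S m)) ≠ ⊥ := fun h => hN <| by
    rw [Subgroup.map_eq_bot_iff, QuotientGroup.ker_mk'] at h
    exact h.trans (le_iSup _ m)
  have := Subgroup.Normal.map (H := N) inferInstance (QuotientGroup.mk' (Ztil p S m))
    (QuotientGroup.mk'_surjective _)
  have : Finite (N.map (QuotientGroup.mk' (Ztil p S m))) :=
    Set.Finite.image (QuotientGroup.mk' (Ztil p S m)) (Set.toFinite (N : Set S))
  obtain ⟨_, ⟨x, hxN, rfl⟩, hx1, hxc, hxp⟩ :=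
    (hS.to_quotient (Ztil p S m)).exists_mem_center_pow_eq_one _ hne
  exact hx1 <| (QuotientGroup.eq_one_iff x).2 <|
    hm ⟨⟨x, hxN⟩, mem_iSup.2 ⟨m + 1, mem_succ_of_mk hxc hxp⟩⟩

theorem centralizer_iSup_le [Fact p.Prime] (hS : IsPGroup p S)
    [Finite (S ⧸ ⨆ n, Ztil p S n)] :
    Subgroup.centralizer (⨆ n, Ztil p S n : Subgroup S) ≤ ⨆ n, Ztil p S n := by
  set U : Subgroup S := ⨆ n, Ztil p S n
  by_contra hC
  have hne : (Subgroup.centralizer (U : Set S)).map (QuotientGroup.mk' U) ≠ ⊥ := fun h => hC <| by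
    rwa [Subgroup.map_eq_bot_iff, QuotientGroup.ker_mk'] at h
  have := Subgroup.Normal.map (H := Subgroup.centralizer (U : Set S)) inferInstance
    (QuotientGroup.mk' U) (QuotientGroup.mk'_surjective _)
  obtain ⟨_, ⟨x, hxC, rfl⟩, hx1, hxc, hxp⟩ :=
    (hS.to_quotient U).exists_mem_center_pow_eq_one _ hne
  have hxU : ∀ s, ⁅x, s⁆ ∈ U := fun s => by
    rw [← QuotientGroup.eq_one_iff]
    exact commutatorElement_eq_one_iff_mul_comm.2 (Subgroup.mem_center_iff.1 hxc (s : S ⧸ U)).symm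
  obtain ⟨m, hm⟩ := exists_forall_mem (p := p) (f := fun q : S ⧸ U => ⁅x, q.out⁆) fun q => hxU _
  obtain ⟨k, hk⟩ := mem_iSup.1 ((QuotientGroup.eq_one_iff (N := U) (x ^ p)).1 hxp)
  refine hx1 ((QuotientGroup.eq_one_iff x).2 <| mem_iSup.2 ⟨max m k + 1, mem_succ (fun s => ?_)
    (monotone (le_max_right m k) hk)⟩)
  obtain ⟨⟨u, hu⟩, hs⟩ := QuotientGroup.mk_out_eq_mul U s
  have hxu : u * x = x * u := Subgroup.mem_centralizer_iff.1 hxC u hu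
  have hcomm : ⁅x, (s : S ⧸ U).out⁆ = ⁅x, s⁆ := by
    rw [hs, commutatorElement_def, commutatorElement_def]
    calc x * (s * u) * x⁻¹ * (s * u)⁻¹ = x * s * (u * x⁻¹) * u⁻¹ * s⁻¹ := by group
      _ = x * s * (x⁻¹ * u) * u⁻¹ * s⁻¹ := by
        rw [show u * x⁻¹ = x⁻¹ * u by rw [mul_inv_eq_iff_eq_mul, mul_assoc, hxu]; group]
      _ = x * s * x⁻¹ * s⁻¹ := by group
  exact hcomm ▸ monotone (le_max_left m k) (hm s)

end Ztil

namespace IsDiscretePToral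

variable {p : ℕ} [Fact p.Prime] {S : Type*} [Group S]

theorem isPGroup (hS : IsDiscretePToral p S) : IsPGroup p S := by
  obtain ⟨S₀, _, ⟨r, ⟨e⟩⟩, _, hQ⟩ := hS
  exact IsPGroup.of_normal_of_quotient S₀ ((Prufer.isPGroup_pi p r).of_equiv e.symm) hQ

theorem finite_quotient_iSup_Ztil (hS : IsDiscretePToral p S) :
    Finite (S ⧸ ⨆ n, Ztil p S n) := by
  have hSp := hS.isPGroup
  obtain ⟨S₀, _, ⟨r, ⟨e⟩⟩, _, -⟩ := hS
  have hcomm : ∀ x ∈ S₀, ∀ y ∈ S₀, Commute x y := fun x hx y hy =>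
    congrArg Subtype.val (e.injective
      (by rw [map_mul, map_mul, mul_comm]) : (⟨x, hx⟩ : S₀) * ⟨y, hy⟩ = ⟨y, hy⟩ * ⟨x, hx⟩)
  suffices hle : S₀ ≤ ⨆ n, Ztil p S n from
    Finite.of_surjective (Subgroup.quotientMapOfLE hle) fun q =>
      QuotientGroup.induction_on q fun s => ⟨(s : S ⧸ S₀), rfl⟩
  intro t ht
  obtain ⟨k, hk⟩ := isPGroup_iff_pow_pow_eq_one.1 hSp t
  let N : Subgroup S :=
    { carrier := {x | x ∈ S₀ ∧ x ^ p ^ k = 1}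
      one_mem' := ⟨one_mem _, one_pow _⟩
      mul_mem' := fun {x y} hx hy =>
        ⟨mul_mem hx.1 hy.1, by rw [(hcomm x hx.1 y hy.1).mul_pow, hx.2, hy.2, one_mul]⟩
      inv_mem' := fun {x} hx => ⟨inv_mem hx.1, by rw [inv_pow, hx.2, inv_one]⟩ }
  have : N.Normal := ⟨fun x hx g =>
    ⟨Subgroup.Normal.conj_mem inferInstance x hx.1 g, by rw [conj_pow, hx.2]; group⟩⟩
  have hfin := Prufer.finite_torsion_pi p r (pow_pos (Fact.out : p.Prime).pos k)
  have : Finite N := ((hfin.preimage e.injective.injOn).image S₀.subtype).subset fun x hx =>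
    ⟨⟨x, hx.1⟩, show e _ ^ p ^ k = 1 by
      rw [← map_pow, map_eq_one_iff e e.injective]; exact Subtype.ext hx.2, rfl⟩
  exact Ztil.finite_normal_le_iSup hSp N ⟨ht, hk⟩

end IsDiscretePToral

/-- If `α` is an automorphism of a discrete `p`-toral group `S`, of finite order prime
to `p`, such that `[α, Z̃ₙ(S)] ≤ Z̃ₙ₋₁(S)` for each `n ≥ 1`, then `α` is the identity. -/
theorem mulAut_eq_one_of_trivial_on_Ztil
    (p : ℕ) [Fact p.Prime] (S : Type*) [Group S] (hS : IsDiscretePToral p S)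
    (α : MulAut S) (hfin : IsOfFinOrder α) (hcop : Nat.Coprime (orderOf α) p)
    (hcomm : ∀ n : ℕ, ∀ x ∈ Ztil p S (n + 1), α x * x⁻¹ ∈ Ztil p S n) :
    α = 1 := by
  have hSp := hS.isPGroup
  have := hS.finite_quotient_iSup_Ztil
  have hfix : ∀ n, ∀ x ∈ Ztil p S n, α x = x := by
    intro n
    induction n with
    | zero =>
      intro x hx
      rw [Ztil.mem_zero.1 hx, map_one]
    | succ n ih => exact fun x hx => hSp.mulAut_apply_eq_self hcop (ih _ (hcomm n x hx))
  have hfixU : ∀ x ∈ ⨆ n, Ztil p S n, α x = x := fun x hx =>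
    let ⟨n, hn⟩ := Ztil.mem_iSup.1 hx
    hfix n x hn
  ext x
  refine hSp.mulAut_apply_eq_self hcop (hfixU _ (Ztil.centralizer_iSup_le hSp ?_))
  rw [Subgroup.mem_centralizer_iff]
  intro u hu
  have hconj : x⁻¹ * u * x ∈ ⨆ n, Ztil p S n := by
    simpa using Subgroup.Normal.conj_mem inferInstance u hu x⁻¹
  have h := hfixU _ hconj
  rw [map_mul, map_mul, map_inv, hfixU u hu] at h
  calc u * (α x * x⁻¹) = α x * ((α x)⁻¹ * u * α x) * x⁻¹ := by group
    _ = α x * x⁻¹ * u := by rw [h]; group
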